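/- Let T be a tournament, uv ∈ E(T), Back the set of back arcs of T, T̄ the tournament T with the arc uv reversed, and Back̄ the set of back arcs of T̄. Then |Back △ Back̄| ≤ 48(√(ADT(T) + 1) + 1). -/

import Mathlib

variable {V : Type*}

def IsTournament (E : V → V → Prop) : Prop :=
  (∀ v : V, ¬ E v v) ∧ ∀ u v : V, u ≠ v → (E u v ↔ ¬ E v u)

def Acyclic (E : V → V → Prop) : Prop :=
  ∀ v : V, ¬ Relation.TransGen E v v

noncomputable def indeg [Fintype V] (E : V → V → Prop) (v : V) : ℕ :=
  Set.ncard {u : V | E u v}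

noncomputable def indegOn [Fintype V] (E : V → V → Prop) (X : Set V) (v : V) : ℕ :=
  Set.ncard {u : V | u ∈ X ∧ E u v}

def IsTriangle (E : V → V → Prop) (t : V × V × V) : Prop :=
  E t.1 t.2.1 ∧ E t.2.1 t.2.2 ∧ E t.2.2 t.1

def triArcs (t : V × V × V) : Set (V × V) :=
  {(t.1, t.2.1), (t.2.1, t.2.2), (t.2.2, t.1)}

def IsADTFamily (E : V → V → Prop) (F : Finset (V × V × V)) : Prop :=
  (∀ t ∈ F, IsTriangle E t) ∧
    ∀ t ∈ F, ∀ s ∈ F, t ≠ s → Disjoint (triArcs t) (triArcs s)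

noncomputable def ADT (E : V → V → Prop) : ℕ :=
  sSup {n : ℕ | ∃ F : Finset (V × V × V), IsADTFamily E F ∧ F.card = n}

def IsFAS (E : V → V → Prop) (S : Finset (V × V)) : Prop :=
  Acyclic fun u v => E u v ∧ (u, v) ∉ S

noncomputable def FAST (E : V → V → Prop) : ℕ :=
  sInf {n : ℕ | ∃ S : Finset (V × V), IsFAS E S ∧ S.card = n}

def IsFVS (E : V → V → Prop) (F : Finset V) : Prop :=
  Acyclic fun a b => E a b ∧ a ∉ F ∧ b ∉ F

noncomputable def FVST [Fintype V] (E : V → V → Prop) : ℕ :=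
  sInf {n : ℕ | ∃ F : Finset V, IsFVS E F ∧ F.card = n}

noncomputable def maxdb [Fintype V] (E : V → V → Prop) : ℕ :=
  (Finset.range (Fintype.card V)).sup fun d => Set.ncard {v : V | indeg E v = d}

open Classical in
noncomputable def prefLen [Fintype V] (E : V → V → Prop) : ℕ :=
  if ∀ d < Fintype.card V, Set.ncard {v : V | indeg E v = d} = 1 then Fintype.card V
  else sInf {d : ℕ | d < Fintype.card V ∧ Set.ncard {v : V | indeg E v = d} ≠ 1}

noncomputable def prefSet [Fintype V] (E : V → V → Prop) : Set V :=
  {v : V | indeg E v < prefLen E}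

noncomputable def minIndeg [Fintype V] (E : V → V → Prop) : ℕ :=
  sInf {k : ℕ | ∃ v : V, indeg E v = k}

noncomputable def minIndegOn [Fintype V] (E : V → V → Prop) (X : Set V) : ℕ :=
  sInf {k : ℕ | ∃ v ∈ X, indegOn E X v = k}

def emptyBuckets [Fintype V] (E : V → V → Prop) : Set ℕ :=
  {d : ℕ | d < Fintype.card V ∧ {v : V | indeg E v = d} = ∅}

def backArcs [Fintype V] (E : V → V → Prop) : Set (V × V) :=
  {p : V × V | E p.1 p.2 ∧ indeg E p.2 ≤ indeg E p.1}

def reverseArc (E : V → V → Prop) (u v : V) : V → V → Prop :=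
  fun a b =>
    (¬ ((a, b) = (u, v) ∨ (a, b) = (v, u)) ∧ E a b) ∨
      ((a, b) = (u, v) ∧ E v u) ∨ ((a, b) = (v, u) ∧ E u v)

def affected [Fintype V] (E : V → V → Prop) (u v : V) : Set V :=
  {w : V | indeg E w + 1 = indeg E u ∨ indeg E w = indeg E u ∨ indeg E w = indeg E u + 1 ∨
      indeg E w + 1 = indeg E v ∨ indeg E w = indeg E v ∨ indeg E w = indeg E v + 1}

def kLong [Fintype V] (E : V → V → Prop) (k : ℕ) (p : V × V) : Prop :=
  (k : ℤ) ≤ |(indeg E p.1 : ℤ) - (indeg E p.2 : ℤ)|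

def longAdj [Fintype V] (E : V → V → Prop) (k : ℕ) (a b : V) : Prop :=
  ((a, b) ∈ backArcs E ∧ kLong E k (a, b)) ∨ ((b, a) ∈ backArcs E ∧ kLong E k (b, a))

def heavySet [Fintype V] (E : V → V → Prop) (k : ℕ) : Set V :=
  {v : V | k < Set.ncard {u : V | longAdj E k u v}}

/-!
Let `U` be the set of arcs of a maximum family of arc-disjoint triangles: `|U| ≤ 3 ADT(T)` and
every triangle has an arc in `U`. If `u → v` is not in `U` and `d(u) = d(v)`, then the number of
`w` with `u → w → v` is at most the number of `w` with `v → w → u`, and each of the latter closes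
a triangle, so `w → u` or `v → w` lies in `U`. Summing over the arcs inside a set `S` of `m`
vertices of equal in-degree gives at most `9 m ADT(T)` transitive triples in `S`. Any tournament
on `m` vertices has at least `m (m - 1) (m - 3) / 8` of them, by convexity of `x ↦ x (x - 1)`
applied to the out-degrees. Hence `m ≤ √(72 ADT(T) + 1) + 2`.

Reversing `u → v` changes only `d(u)` and `d(v)`, each by one, so apart from `(u, v)` and `(v, u)`
an arc changes its status only if it joins `u` or `v` to a vertex in one of four in-degree classes.
-/

section TriangleFamilies

open Finset

variable {E : V → V → Prop}

theorem IsADTFamily.insert [DecidableEq V] {F : Finset (V × V × V)}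
    {t : V × V × V} (hF : IsADTFamily E F) (ht : IsTriangle E t)
    (hdisj : ∀ s ∈ F, Disjoint (triArcs t) (triArcs s)) : IsADTFamily E (insert t F) := by
  refine ⟨forall_mem_insert _ _ _ |>.2 ⟨ht, hF.1⟩, fun s hs r hr hsr => ?_⟩
  rcases mem_insert.1 hs with rfl | hsF <;> rcases mem_insert.1 hr with rfl | hrF
  · exact absurd rfl hsr
  · exact hdisj r hrF
  · exact (hdisj s hsF).symm
  · exact hF.2 s hsF r hrF hsr

theorem bddAbove_card_isADTFamily [Finite V] (E : V → V → Prop) :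
    BddAbove {n : ℕ | ∃ F : Finset (V × V × V), IsADTFamily E F ∧ #F = n} := by
  have := Fintype.ofFinite V
  refine ⟨Fintype.card (V × V × V), ?_⟩
  rintro _ ⟨F, -, rfl⟩
  exact card_le_univ F

theorem IsADTFamily.card_le_ADT [Finite V] {F : Finset (V × V × V)}
    (hF : IsADTFamily E F) : #F ≤ ADT E :=
  le_csSup (bddAbove_card_isADTFamily E) ⟨F, hF, rfl⟩

theorem exists_isADTFamily_card_eq_ADT [Finite V] (E : V → V → Prop) :
    ∃ F : Finset (V × V × V), IsADTFamily E F ∧ #F = ADT E :=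
  Nat.sSup_mem (s := {n : ℕ | ∃ F : Finset (V × V × V), IsADTFamily E F ∧ #F = n})
    ⟨0, ∅, by simp [IsADTFamily], card_empty⟩ (bddAbove_card_isADTFamily E)

/-- A finite set of pairs meeting the arc set of every directed triangle; used to charge triangles
to few arcs. -/
def IsTriangleTransversal (E : V → V → Prop) (U : Finset (V × V)) : Prop :=
  ∀ t, IsTriangle E t → ∃ e ∈ triArcs t, e ∈ U

theorem exists_isTriangleTransversal_card_le [Finite V] (E : V → V → Prop) :
    ∃ U : Finset (V × V), IsTriangleTransversal E U ∧ #U ≤ 3 * ADT E := by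
  classical
  obtain ⟨F, hF, hcard⟩ := exists_isADTFamily_card_eq_ADT E
  let U : Finset (V × V) := F.biUnion fun t => {(t.1, t.2.1), (t.2.1, t.2.2), (t.2.2, t.1)}
  have mem_U {e : V × V} : e ∈ U ↔ ∃ t ∈ F, e ∈ triArcs t := by simp [U, triArcs]
  refine ⟨U, fun t ht => ?_, ?_⟩
  · by_contra! hmiss
    have hdisj : ∀ s ∈ F, Disjoint (triArcs t) (triArcs s) := fun s hs =>
      Set.disjoint_left.2 fun e het hes => hmiss e het (mem_U.2 ⟨s, hs, hes⟩)
    have htF : t ∉ F := fun h =>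
      hmiss (t.1, t.2.1) (by simp [triArcs]) (mem_U.2 ⟨t, h, by simp [triArcs]⟩)
    have hle := (hF.insert ht hdisj).card_le_ADT
    rw [card_insert_of_notMem htF] at hle
    omega
  · calc #U ≤ #F * 3 := card_biUnion_le_card_mul _ _ _ fun _ _ => card_le_three
      _ = 3 * ADT E := by rw [hcard, mul_comm]

end TriangleFamilies

section TransitiveTriples

open Finset

variable {E : V → V → Prop}

/-- The number of transitive triples `u → w → v`, `u → v` inside `S`. -/
def numTransitive (E : V → V → Prop) [DecidableRel E] (S : Finset V) : ℕ :=
  ∑ u ∈ S, ∑ v ∈ S with E u v, #{w ∈ S | E u w ∧ E w v}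

theorem indeg_eq_card_filter [Fintype V] (E : V → V → Prop) [DecidableRel E] (v : V) :
    indeg E v = #{u | E u v} := by
  rw [indeg, Set.ncard_eq_toFinset_card', Set.toFinset_ofPred]

theorem IsTournament.asymm (hT : IsTournament E) {u v : V} (huv : E u v) :
    ¬ E v u := by
  have hne : u ≠ v := by rintro rfl; exact hT.1 _ huv
  exact (hT.2 u v hne).1 huv

theorem IsTournament.two_mul_sum_card_filter_add_card [DecidableRel E]
    (hT : IsTournament E) (S : Finset V) :
    2 * ∑ v ∈ S, #{u ∈ S | E u v} + #S = #S ^ 2 := by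
  classical
  have hvertex (v : V) (hv : v ∈ S) : #{u ∈ S | E u v} + #{u ∈ S | E v u} + 1 = #S := by
    have hout : ({u ∈ S | ¬ E u v} : Finset V) = insert v {u ∈ S | E v u} := by
      ext u
      have := hT.1 v
      have := hT.2 u v
      grind
    have hv' : v ∉ ({u ∈ S | E v u} : Finset V) := by simp [hT.1 v]
    rw [← card_filter_add_card_filter_not (s := S) (E · v), hout, card_insert_of_notMem hv',
      add_assoc]
  have hswap : ∑ v ∈ S, #{u ∈ S | E v u} = ∑ v ∈ S, #{u ∈ S | E u v} :=
    sum_card_bipartiteAbove_eq_sum_card_bipartiteBelow E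
  calc 2 * ∑ v ∈ S, #{u ∈ S | E u v} + #S
      = ∑ v ∈ S, (#{u ∈ S | E u v} + #{u ∈ S | E v u} + 1) := by
        rw [sum_add_distrib, sum_add_distrib, hswap, two_mul, card_eq_sum_ones]
    _ = #S ^ 2 := by rw [sum_congr rfl hvertex, sum_const, smul_eq_mul, sq]

theorem IsTournament.le_eight_mul_numTransitive [DecidableRel E]
    (hT : IsTournament E) (S : Finset V) :
    (#S * (#S - 1) * (#S - 3) : ℝ) ≤ 8 * numTransitive E S := by
  let out (u : V) : Finset V := {v ∈ S | E u v}
  have hout : 2 * ∑ u ∈ S, #(out u) + #S = #S ^ 2 := by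
    rw [← hT.two_mul_sum_card_filter_add_card S]
    congr 2
    exact sum_card_bipartiteAbove_eq_sum_card_bipartiteBelow E
  have hsq : ∑ u ∈ S, #(out u) ^ 2 = 2 * numTransitive E S + ∑ u ∈ S, #(out u) := by
    rw [numTransitive, mul_sum, ← sum_add_distrib]
    refine sum_congr rfl fun u _ => ?_
    rw [← hT.two_mul_sum_card_filter_add_card (out u)]
    simp only [out, filter_filter]
  have hcs : (∑ u ∈ S, #(out u)) ^ 2 ≤ #S * ∑ u ∈ S, #(out u) ^ 2 := sq_sum_le_card_mul_sum_sq
  rw [hsq] at hcs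
  generalize ∑ u ∈ S, #(out u) = a at hout hcs
  rcases S.eq_empty_or_nonempty with rfl | hS
  · simp
  have hpos : (0 : ℝ) < #S := by exact_mod_cast hS.card_pos
  have ha : (a : ℝ) = #S * (#S - 1) / 2 := by
    have : (2 * a + #S : ℝ) = #S ^ 2 := by exact_mod_cast hout
    linarith
  have hcs' : (a ^ 2 : ℝ) ≤ #S * (2 * numTransitive E S + a) := by exact_mod_cast hcs
  rw [ha] at hcs'
  refine le_of_mul_le_mul_left ?_ hpos
  linarith

theorem IsTournament.card_transitive_le_card_cyclic [Fintype V] [DecidableRel E]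
    (hT : IsTournament E) {u v : V} (huv : (u, v) ∈ backArcs E) :
    #{w | E u w ∧ E w v} ≤ #{w | E v w ∧ E w u} := by
  classical
  obtain ⟨harc, hdeg⟩ := huv
  rw [indeg_eq_card_filter, indeg_eq_card_filter, ← card_sdiff_le_card_sdiff_iff] at hdeg
  refine (card_le_card ?_).trans (hdeg.trans (card_le_card ?_))
  · intro w hw
    simp only [mem_filter, mem_univ, true_and, mem_sdiff] at hw ⊢
    exact ⟨hw.2, hT.asymm hw.1⟩
  · intro w hw
    simp only [mem_filter, mem_univ, true_and, mem_sdiff] at hw ⊢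
    have hvw : v ≠ w := by rintro rfl; exact hT.asymm harc hw.1
    exact ⟨(hT.2 v w hvw).2 hw.2, hw.1⟩

theorem IsTriangleTransversal.card_cyclic_le [Fintype V] [DecidableEq V]
    [DecidableRel E] {U : Finset (V × V)} (hU : IsTriangleTransversal E U) {u v : V} (huv : E u v)
    (huvU : (u, v) ∉ U) :
    #{w | E v w ∧ E w u} ≤ #{e ∈ U | e.2 = u} + #{e ∈ U | e.1 = v} := by
  have hcover : ({w | E v w ∧ E w u} : Finset V) ⊆
      {e ∈ U | e.2 = u}.image Prod.fst ∪ {e ∈ U | e.1 = v}.image Prod.snd := by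
    intro w hw
    obtain ⟨hvw, hwu⟩ := (mem_filter.1 hw).2
    obtain ⟨e, he, heU⟩ := hU (u, v, w) ⟨huv, hvw, hwu⟩
    rcases he with rfl | rfl | rfl
    · exact absurd heU huvU
    · exact mem_union_right _ (mem_image.2 ⟨(v, w), by simpa using heU, rfl⟩)
    · exact mem_union_left _ (mem_image.2 ⟨(w, u), by simpa using heU, rfl⟩)
  exact (card_le_card hcover).trans <|
    (card_union_le _ _).trans (add_le_add card_image_le card_image_le)

theorem IsTournament.card_transitive_filter_le [Fintype V] [DecidableEq V]
    [DecidableRel E] (hT : IsTournament E) {U : Finset (V × V)} (hU : IsTriangleTransversal E U)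
    (S : Finset V) {u v : V} (huv : (u, v) ∈ backArcs E) :
    #{w ∈ S | E u w ∧ E w v} ≤
      (if (u, v) ∈ U then #S else 0) + (#{e ∈ U | e.2 = u} + #{e ∈ U | e.1 = v}) := by
  split_ifs with huvU
  · exact (card_filter_le _ _).trans (Nat.le_add_right _ _)
  · rw [zero_add]
    calc #{w ∈ S | E u w ∧ E w v} ≤ #{w | E u w ∧ E w v} :=
          card_le_card (filter_subset_filter _ (subset_univ S))
      _ ≤ #{w | E v w ∧ E w u} := hT.card_transitive_le_card_cyclic huv
      _ ≤ _ := hU.card_cyclic_le huv.1 huvU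

theorem IsTournament.numTransitive_le [Fintype V] [DecidableRel E]
    (hT : IsTournament E) {U : Finset (V × V)} (hU : IsTriangleTransversal E U) {S : Finset V}
    {d : ℕ} (hS : ∀ v ∈ S, indeg E v = d) :
    numTransitive E S ≤ 3 * #S * #U := by
  classical
  have hpair (u : V) (hu : u ∈ S) (v : V) (hv : v ∈ S) (huv : E u v) :=
    hT.card_transitive_filter_le hU S (show (u, v) ∈ backArcs E from
      ⟨huv, ((hS v hv).trans (hS u hu).symm).le⟩)
  have harcs : ∑ u ∈ S, ∑ v ∈ S, (if (u, v) ∈ U then #S else 0) ≤ #U * #S := by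
    rw [← sum_product' (f := fun u v => if (u, v) ∈ U then #S else 0), ← sum_filter, sum_const,
      smul_eq_mul]
    exact Nat.mul_le_mul_right _ (card_le_card fun e he => (mem_filter.1 he).2)
  have hfiber (f : V × V → V) : ∑ x ∈ S, #{e ∈ U | f e = x} ≤ #U :=
    (sum_card_fiberwise_eq_card_filter U S f).trans_le (card_filter_le _ _)
  calc numTransitive E S
      ≤ ∑ u ∈ S, ∑ v ∈ S, ((if (u, v) ∈ U then #S else 0) +
          (#{e ∈ U | e.2 = u} + #{e ∈ U | e.1 = v})) :=
        sum_le_sum fun u hu => (sum_le_sum fun v hv =>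
          hpair u hu v (mem_filter.1 hv).1 (mem_filter.1 hv).2).trans
            (sum_le_sum_of_subset (filter_subset _ S))
    _ = ∑ u ∈ S, ∑ v ∈ S, (if (u, v) ∈ U then #S else 0) +
          (#S * ∑ u ∈ S, #{e ∈ U | e.2 = u} + #S * ∑ v ∈ S, #{e ∈ U | e.1 = v}) := by
        simp only [sum_add_distrib, sum_const, smul_eq_mul, mul_sum]
    _ ≤ #U * #S + (#S * #U + #S * #U) := by
        gcongr
        exacts [hfiber Prod.snd, hfiber Prod.fst]
    _ = 3 * #S * #U := by ring

end TransitiveTriples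

section Buckets

open Finset

/-- The in-degree class `d`: the set of vertices of in-degree `d`. -/
def bucket [Fintype V] (E : V → V → Prop) (d : ℕ) : Set V :=
  {w | indeg E w = d}

theorem IsTournament.ncard_bucket_le [Fintype V] {E : V → V → Prop} (hT : IsTournament E) (d : ℕ) :
    ((bucket E d).ncard : ℝ) ≤ √(72 * ADT E + 1) + 2 := by
  classical
  obtain ⟨U, hU, hcard⟩ := exists_isTriangleTransversal_card_le E
  rw [Set.ncard_eq_toFinset_card']
  set S := (bucket E d).toFinset
  have hS (v : V) (hv : v ∈ S) : indeg E v = d :=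
    show v ∈ bucket E d from Set.mem_toFinset.1 hv
  have hupper : numTransitive E S ≤ 3 * #S * (3 * ADT E) :=
    (hT.numTransitive_le hU hS).trans (by gcongr)
  have hlower := hT.le_eight_mul_numTransitive S
  rcases S.eq_empty_or_nonempty with hempty | hnonempty
  · simp only [hempty, Finset.card_empty, Nat.cast_zero]
    positivity
  have hpos : (0 : ℝ) < #S := by exact_mod_cast hnonempty.card_pos
  have hquad : ((#S - 1) * (#S - 3) : ℝ) ≤ 72 * ADT E := by
    have : (numTransitive E S : ℝ) ≤ 3 * #S * (3 * ADT E) := by exact_mod_cast hupper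
    refine le_of_mul_le_mul_left ?_ hpos
    linarith
  have hsq : ((#S : ℝ) - 2) ^ 2 ≤ 72 * ADT E + 1 := by linarith
  linarith [Real.le_sqrt_of_sq_le hsq]

end Buckets

section ReverseArc

variable {E : V → V → Prop} {u v : V}

theorem indeg_reverseArc_of_ne [Fintype V] (E : V → V → Prop) {w : V} (hwu : w ≠ u)
    (hwv : w ≠ v) : indeg (reverseArc E u v) w = indeg E w := by
  simp [indeg, reverseArc, hwu, hwv]

theorem indeg_reverseArc_tail [Fintype V] (huv : E u v) (hvu : ¬ E v u) :
    indeg (reverseArc E u v) u = indeg E u + 1 := by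
  have hset : {a | reverseArc E u v a u} = insert v {a | E a u} := by
    ext a
    simp only [reverseArc, Set.mem_ofPred_eq, Set.mem_insert_iff]
    grind
  have hv : v ∉ {a | E a u} := hvu
  rw [indeg, hset, Set.ncard_insert_of_notMem hv, indeg]

theorem indeg_reverseArc_head [Fintype V] (huv : E u v) (hvu : ¬ E v u) :
    indeg (reverseArc E u v) v + 1 = indeg E v := by
  have hset : {a | E a v} = insert u {a | reverseArc E u v a v} := by
    ext a
    simp only [reverseArc, Set.mem_ofPred_eq, Set.mem_insert_iff]
    grind
  have hu : u ∉ {a | reverseArc E u v a v} := by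
    simp only [reverseArc, Set.mem_ofPred_eq]
    grind
  rw [indeg, indeg, hset, Set.ncard_insert_of_notMem hu]

theorem symmDiff_backArcs_reverseArc_subset [Fintype V] (huv : E u v) (hvu : ¬ E v u) :
    symmDiff (backArcs E) (backArcs (reverseArc E u v)) ⊆
      {u} ×ˢ bucket E (indeg E u + 1) ∪ bucket E (indeg E u) ×ˢ {u} ∪
        {v} ×ˢ bucket E (indeg E v) ∪ bucket E (indeg E v - 1) ×ˢ {v} ∪ {(u, v), (v, u)} := by
  rintro ⟨a, b⟩ hab
  by_cases hpair : (a, b) = (u, v) ∨ (a, b) = (v, u)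
  · exact Or.inr hpair
  have harc : reverseArc E u v a b ↔ E a b := by
    simp only [reverseArc]
    tauto
  have hflip : ¬ (indeg E b ≤ indeg E a ↔
      indeg (reverseArc E u v) b ≤ indeg (reverseArc E u v) a) := by
    simp only [Set.mem_symmDiff, backArcs, Set.mem_ofPred_eq, harc] at hab
    tauto
  have htail := indeg_reverseArc_tail huv hvu
  have hhead := indeg_reverseArc_head huv hvu
  have hother (w : V) (hwu : w ≠ u) (hwv : w ≠ v) := indeg_reverseArc_of_ne E hwu hwv
  simp only [Set.mem_union, Set.mem_prod, Set.mem_singleton_iff, Set.mem_insert_iff, bucket,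
    Set.mem_ofPred_eq]
  by_cases a = u <;> by_cases a = v <;> by_cases b = u <;> by_cases b = v <;> grind

theorem ncard_symmDiff_backArcs_reverseArc_le [Fintype V] (huv : E u v) (hvu : ¬ E v u) :
    (symmDiff (backArcs E) (backArcs (reverseArc E u v))).ncard ≤
      (bucket E (indeg E u + 1)).ncard + (bucket E (indeg E u)).ncard +
        (bucket E (indeg E v)).ncard + (bucket E (indeg E v - 1)).ncard + 2 := by
  have hpair : ({(u, v), (v, u)} : Set (V × V)).ncard ≤ 2 := by
    simpa using Set.ncard_insert_le (u, v) {(v, u)}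
  refine (Set.ncard_le_ncard (symmDiff_backArcs_reverseArc_subset huv hvu)).trans ?_
  refine (Set.ncard_union_le _ _).trans (add_le_add ?_ hpair)
  refine (Set.ncard_union_le _ _).trans (add_le_add ?_ (by simp [Set.ncard_prod]))
  refine (Set.ncard_union_le _ _).trans (add_le_add ?_ (by simp [Set.ncard_prod]))
  exact (Set.ncard_union_le _ _).trans (by simp [Set.ncard_prod])

end ReverseArc

/-- Reversing one arc changes the set of back arcs by at most 48(√(ADT(T)+1)+1). -/
theorem stmt11 [Fintype V] (E : V → V → Prop) (hT : IsTournament E) (u v : V)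
    (huv : E u v) :
    (Set.ncard (symmDiff (backArcs E) (backArcs (reverseArc E u v))) : ℝ) ≤
      48 * (Real.sqrt ((ADT E : ℝ) + 1) + 1) := by
  have hvu : ¬ E v u := hT.asymm huv
  have hcount : ((symmDiff (backArcs E) (backArcs (reverseArc E u v))).ncard : ℝ) ≤
      (bucket E (indeg E u + 1)).ncard + (bucket E (indeg E u)).ncard +
        (bucket E (indeg E v)).ncard + (bucket E (indeg E v - 1)).ncard + 2 := by
    exact_mod_cast ncard_symmDiff_backArcs_reverseArc_le huv hvu
  have hsqrt : √(72 * ADT E + 1) ≤ 9 * √((ADT E : ℝ) + 1) := by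
    rw [Real.sqrt_le_left (by positivity), mul_pow, Real.sq_sqrt (by positivity)]
    linarith [(ADT E).cast_nonneg (α := ℝ)]
  have hbucket (d : ℕ) : ((bucket E d).ncard : ℝ) ≤ 9 * √((ADT E : ℝ) + 1) + 2 :=
    (hT.ncard_bucket_le d).trans (by gcongr)
  linarith [hbucket (indeg E u + 1), hbucket (indeg E u), hbucket (indeg E v),
    hbucket (indeg E v - 1), Real.sqrt_nonneg ((ADT E : ℝ) + 1)]
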